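/- For any VBPG sequence (x^k), the function values satisfy the sufficient decrease property F(x^k) − F(x^{k+1}) ≥ a·‖x^k − x^{k+1}‖² for all k, with a = (1/2)(m/ε̄ − L) > 0; consequently the sequence (F(x^k)) is nonincreasing and the series ∑_{k=0}^∞ ‖x^k − x^{k+1}‖² converges (is summable). -/

import Mathlib

open Set Metric Filter Topology
open scoped RealInnerProductSpace

noncomputable section

variable {E : Type*} [NormedAddCommGroup E] [InnerProductSpace ℝ E] [FiniteDimensional ℝ E]

/-- The Bregman distance generated by `K` (with gradient `K'`). -/
def bregD (K : E → ℝ) (K' : E → E) (x y : E) : ℝ := K y - K x - ⟪K' x, y - x⟫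

/-- The Bregman proximal mapping: the set of global minimizers of
`y ↦ ⟪∇f x, y - x⟫ + g y + D(x,y)/ε`. -/
def bregT (f' : E → E) (g : E → ℝ) (K : E → ℝ) (K' : E → E) (ε : ℝ) (x : E) : Set E :=
  {y | ∀ z, ⟪f' x, y - x⟫ + g y + bregD K K' x y / ε ≤ ⟪f' x, z - x⟫ + g z + bregD K K' x z / ε}

/-- The Bregman proximal envelope. -/
def bregEnv (f : E → ℝ) (f' : E → E) (g : E → ℝ) (K : E → ℝ) (K' : E → E) (ε : ℝ) (x : E) : ℝ :=
  ⨅ y : E, (f x + ⟪f' x, y - x⟫ + g y + bregD K K' x y / ε)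

theorem descent_aux (f : E → ℝ) (f' : E → E) (L : ℝ)
    (hf : ∀ x, HasGradientAt f (f' x) x)
    (hlip : ∀ x y, ‖f' x - f' y‖ ≤ L * ‖x - y‖) (x y : E) :
    f y ≤ f x + ⟪f' x, y - x⟫ + L / 2 * ‖y - x‖ ^ 2 := by
  set v := y - x with hv
  have hd : ∀ t : ℝ, HasDerivAt
      (fun t : ℝ => f (x + t • v) - t * ⟪f' x, v⟫ - L / 2 * ‖v‖ ^ 2 * t ^ 2)
      (⟪f' (x + t • v), v⟫ - ⟪f' x, v⟫ - L * ‖v‖ ^ 2 * t) t := by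
    intro t
    have h1 : HasDerivAt (fun t : ℝ => x + t • v) v t := by
      simpa using ((hasDerivAt_id t).smul_const v).const_add x
    have h2 : HasDerivAt (fun t : ℝ => f (x + t • v)) ⟪f' (x + t • v), v⟫ t := by
      have := (hf (x + t • v)).hasFDerivAt.comp_hasDerivAt t h1
      refine HasDerivAt.congr_deriv this ?_
      simp
    have h3 := (hasDerivAt_id t).mul_const ⟪f' x, v⟫
    have h4 := ((hasDerivAt_id t).pow 2).const_mul (L / 2 * ‖v‖ ^ 2)
    refine ((h2.sub h3).sub h4).congr_deriv ?_
    simp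
    ring
  have hanti : AntitoneOn
      (fun t : ℝ => f (x + t • v) - t * ⟪f' x, v⟫ - L / 2 * ‖v‖ ^ 2 * t ^ 2) (Icc 0 1) := by
    apply antitoneOn_of_deriv_nonpos (convex_Icc 0 1)
    · exact fun t _ => (hd t).continuousAt.continuousWithinAt
    · exact fun t _ => (hd t).differentiableAt.differentiableWithinAt
    · intro t ht
      rw [interior_Icc] at ht
      rw [(hd t).deriv, ← inner_sub_left]
      have h1 := real_inner_le_norm (f' (x + t • v) - f' x) v
      have h2 := hlip (x + t • v) x
      rw [add_sub_cancel_left, norm_smul, Real.norm_of_nonneg ht.1.le] at h2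
      have h3 := mul_le_mul_of_nonneg_right h2 (norm_nonneg v)
      nlinarith
  have h := hanti (left_mem_Icc.2 zero_le_one) (right_mem_Icc.2 zero_le_one) zero_le_one
  have e : x + v = y := by simp [hv]
  simp only [one_smul, zero_smul, e, add_zero] at h
  linarith

/-- Sufficient decrease along VBPG iterates, monotonicity of the values, and
square-summability of the successive displacements. -/
theorem stmt10
    (f g : E → ℝ) (f' : E → E) (L : ℝ)
    (hL : 0 < L)
    (hf : ∀ x, HasGradientAt f (f' x) x)
    (hlip : ∀ x y, ‖f' x - f' y‖ ≤ L * ‖x - y‖)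
    (hg : Continuous g)
    (hlevel : ∀ r : ℝ, Bornology.IsBounded {x : E | f x + g x ≤ r})
    (Kk : ℕ → E → ℝ) (Kk' : ℕ → E → E) (mk Mk : ℕ → ℝ) (εk : ℕ → ℝ) (εlo εhi : ℝ)
    (x : ℕ → E) (m M : ℝ) (hm : 0 < m) (hmM : m ≤ M)
    (hmk : ∀ k, m ≤ mk k) (hMk : ∀ k, Mk k ≤ M)
    (hKk : ∀ k y, HasGradientAt (Kk k) (Kk' k y) y)
    (hKkstrong : ∀ k (y z : E), Kk k y + ⟪Kk' k y, z - y⟫ + mk k / 2 * ‖z - y‖ ^ 2 ≤ Kk k z)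
    (hKklip : ∀ k (y z : E), ‖Kk' k y - Kk' k z‖ ≤ Mk k * ‖y - z‖)
    (hεlo : 0 < εlo) (hεle : εlo ≤ εhi) (hεhi : εhi * L < m)
    (hεk : ∀ k, εk k ∈ Set.Icc εlo εhi)
    (hiter : ∀ k, x (k+1) ∈ bregT f' g (Kk k) (Kk' k) (εk k) (x k))
    :
    (0 < 1 / 2 * (m / εhi - L)) ∧
    (∀ k, f (x k) + g (x k) - (f (x (k+1)) + g (x (k+1))) ≥
      1 / 2 * (m / εhi - L) * ‖x k - x (k+1)‖ ^ 2) ∧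
    Antitone (fun k => f (x k) + g (x k)) ∧
    Summable (fun k => ‖x k - x (k+1)‖ ^ 2) := by
  have hhi : 0 < εhi := hεlo.trans_le hεle
  have ha : 0 < 1 / 2 * (m / εhi - L) := by
    have : L < m / εhi := by rw [lt_div_iff₀ hhi]; linarith
    linarith
  have hdec : ∀ k, f (x k) + g (x k) - (f (x (k+1)) + g (x (k+1))) ≥
      1 / 2 * (m / εhi - L) * ‖x k - x (k+1)‖ ^ 2 := by
    intro k
    have h1 := descent_aux f f' L hf hlip (x k) (x (k+1))
    have h2 := hiter k (x k)
    have h3 := hKkstrong k (x k) (x (k+1))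
    have hk0 : 0 < εk k := hεlo.trans_le (hεk k).1
    have h4 : m / εhi * (1 / 2 * ‖x (k+1) - x k‖ ^ 2)
        ≤ bregD (Kk k) (Kk' k) (x k) (x (k+1)) / εk k := by
      have hb : m * (1 / 2 * ‖x (k+1) - x k‖ ^ 2) ≤ bregD (Kk k) (Kk' k) (x k) (x (k+1)) := by
        unfold bregD
        nlinarith [hmk k, sq_nonneg ‖x (k+1) - x k‖]
      calc m / εhi * (1 / 2 * ‖x (k+1) - x k‖ ^ 2)
          = m * (1 / 2 * ‖x (k+1) - x k‖ ^ 2) / εhi := by ring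
        _ ≤ m * (1 / 2 * ‖x (k+1) - x k‖ ^ 2) / εk k :=
            div_le_div_of_nonneg_left (by positivity) hk0 (hεk k).2
        _ ≤ _ := div_le_div_of_nonneg_right hb hk0.le
    have h5 : bregD (Kk k) (Kk' k) (x k) (x k) = 0 := by simp [bregD]
    rw [h5, sub_self, inner_zero_right, zero_div] at h2
    rw [norm_sub_rev (x k)]
    linarith
  have hanti : Antitone (fun k => f (x k) + g (x k)) := by
    apply antitone_nat_of_succ_le
    intro k
    have := hdec k
    have h0 : 0 ≤ 1 / 2 * (m / εhi - L) * ‖x k - x (k+1)‖ ^ 2 :=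
      mul_nonneg ha.le (sq_nonneg _)
    linarith
  refine ⟨ha, hdec, hanti, ?_⟩
  have hcont : Continuous (fun y => f y + g y) :=
    (continuous_iff_continuousAt.2 fun y => (hf y).continuousAt).add hg
  have hcomp : IsCompact {y : E | f y + g y ≤ f (x 0) + g (x 0)} :=
    isCompact_of_isClosed_isBounded (isClosed_le hcont continuous_const) (hlevel _)
  obtain ⟨c, hc⟩ := hcomp.bddBelow_image hcont.continuousOn
  have hlow : ∀ k, c ≤ f (x k) + g (x k) := fun k =>
    hc ⟨x k, hanti (Nat.zero_le k), rfl⟩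
  refine summable_of_sum_range_le
    (c := (f (x 0) + g (x 0) - c) / (1 / 2 * (m / εhi - L))) (fun _ => sq_nonneg _) ?_
  intro n
  rw [le_div_iff₀ ha]
  have hs : ∀ n, (∑ i ∈ Finset.range n, ‖x i - x (i+1)‖ ^ 2) * (1 / 2 * (m / εhi - L))
      ≤ f (x 0) + g (x 0) - (f (x n) + g (x n)) := by
    intro n
    induction n with
    | zero => simp
    | succ n ih =>
      rw [Finset.sum_range_succ, add_mul]
      have := hdec n
      linarith
  linarith [hs n, hlow n]
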